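/- arXiv:0903.4637 — 2 statements merged into one kernel-verified Lean document; each statement's English description precedes it below -/
import Mathlib

section
/- Let C be a convex body of minimal width w > 0 in E^d, and let P_1, ..., P_n be planks of widths w_1, ..., w_n > 0 with w_0 := w_1 + ... + w_n < w. Then there exists a set Q ⊆ E^d which is the intersection of at most 2^n translates of C, has minimal width w(Q) ≥ w − w_0, and satisfies vol_d(C \ (P_1 ∪ ... ∪ P_n)) ≥ vol_d(Q); in particular vol_d((P_1 ∪ ... ∪ P_n) ∩ C) ≤ vol_d(C) − vol_d(Q). -/
open MeasureTheory
open scoped RealInnerProductSpace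

/-- The width of a set `C` in direction `u`. -/
noncomputable def dirWidth {d : ℕ} (C : Set (EuclideanSpace ℝ (Fin d)))
    (u : EuclideanSpace ℝ (Fin d)) : ℝ :=
  sSup ((fun x => ⟪x, u⟫) '' C) - sInf ((fun x => ⟪x, u⟫) '' C)

/-- The minimal width of a set `C`: the infimum of the widths over all unit directions. -/
noncomputable def minWidth {d : ℕ} (C : Set (EuclideanSpace ℝ (Fin d))) : ℝ :=
  ⨅ u : {v : EuclideanSpace ℝ (Fin d) // ‖v‖ = 1}, dirWidth C u

/-- `P` is a plank of width `w`. -/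
def IsPlank {d : ℕ} (P : Set (EuclideanSpace ℝ (Fin d))) (w : ℝ) : Prop :=
  0 < w ∧ ∃ (u c : EuclideanSpace ℝ (Fin d)), ‖u‖ = 1 ∧
    P = {x | |⟪x - c, u⟫| ≤ w / 2}

/-!
Bang's choice of signs: for vectors `vᵢ` and reals `mᵢ`, the signs `ε` maximizing
`‖∑ εᵢ vᵢ‖² - 2 ∑ εᵢ mᵢ` satisfy `‖vᵢ‖² ≤ εᵢ (⟪∑ εⱼ vⱼ, vᵢ⟫ - mᵢ)` for all `i`, because flipping one
sign does not increase the maximum. With `vᵢ = (wᵢ / 2) uᵢ`, where `uᵢ` is the unit normal of the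
`i`-th plank, this says that every point `x` has a translate `x + ∑ εᵢ vᵢ` outside all the open
planks, on the side of the `i`-th plank prescribed by `εᵢ`.

Let `Q` be the set of all `x` for which every `x + ∑ ± vᵢ` lies in `C`. Cut `Q` into pieces
according to the signs chosen for `x`, and translate each piece accordingly: the translates lie in
`C`, avoid the open planks and do not overlap, since different signs mean different sides of some
plank. Hence `vol Q ≤ vol (C \ ⋃ Pᵢ)`.

For the width of `Q`, recall that `C` contains a chord of length `w = minWidth C` in each direction
`uᵢ`. Replacing proportions `wᵢ / w` of `C` by the midpoints of these chords gives a homothetic copy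
of `C` of ratio `1 - ∑ wᵢ / w`, and adding `± vᵢ` only moves the midpoints to endpoints of the
chords, so the copy lies in `Q`.
-/

open scoped Pointwise

section BangCore

variable {ι E : Type*} [Fintype ι]

/-- Bang's set: the points whose translates by all signed sums `∑ ± vᵢ` lie in `C`, that is, the
intersection of the translates of `C` by these sums. The signs are units of `ℤ`, acting on the
additive group `E`. -/
def bangCore [AddCommGroup E] (C : Set E) (v : ι → E) : Set E :=
  {x | ∀ ε : ι → ℤˣ, x + ∑ i, ε i • v i ∈ C}

theorem exists_finset_bangCore_eq_biInter [AddCommGroup E] (C : Set E) (v : ι → E) :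
    ∃ s : Finset E, s.Nonempty ∧ s.card ≤ 2 ^ Fintype.card ι ∧
      bangCore C v = ⋂ t ∈ s, (fun x => t + x) '' C := by
  classical
  refine ⟨Finset.univ.image fun ε : ι → ℤˣ => -∑ i, ε i • v i, Finset.univ_nonempty.image _,
    Finset.card_image_le.trans (by simp), ?_⟩
  ext x
  simp [bangCore, add_comm]

theorem isCompact_bangCore [AddCommGroup E] [TopologicalSpace E] [IsTopologicalAddGroup E]
    [T2Space E] {C : Set E} (hC : IsCompact C) (v : ι → E) : IsCompact (bangCore C v) := by
  obtain ⟨s, ⟨t, ht⟩, -, hs⟩ := exists_finset_bangCore_eq_biInter C v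
  have htranslate (t : E) : IsCompact ((fun x => t + x) '' C) := hC.image (by fun_prop)
  rw [hs]
  exact (htranslate t).of_isClosed_subset (isClosed_biInter fun t _ => (htranslate t).isClosed)
    (Set.biInter_subset_of_mem ht)

theorem convex_one_sub_sum_smul_add_sum_smul_mem [AddCommGroup E] [Module ℝ E] {C : Set E}
    (hC : Convex ℝ C) {t : ι → ℝ} (ht : ∀ i, 0 ≤ t i) (ht_sum : ∑ i, t i ≤ 1) {x : E} (hx : x ∈ C)
    {z : ι → E} (hz : ∀ i, z i ∈ C) : (1 - ∑ i, t i) • x + ∑ i, t i • z i ∈ C := by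
  have hmem := hC.sum_mem (t := Finset.univ) (w := fun o : Option ι => o.elim (1 - ∑ i, t i) t)
    (z := fun o => o.elim x z) (Option.forall.2 ⟨fun _ => sub_nonneg.2 ht_sum, fun i _ => ht i⟩)
    (by simp [Fintype.sum_option]) (Option.forall.2 ⟨fun _ => hx, fun i _ => hz i⟩)
  simpa only [Fintype.sum_option, Option.elim] using hmem

theorem midpoint_add_units_smul_mem_pair [AddCommGroup E] [Module ℝ E] (a b : E) (ε : ℤˣ) :
    midpoint ℝ a b + ε • (1 / 2 : ℝ) • (b - a) ∈ ({a, b} : Set E) := by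
  rw [midpoint_eq_smul_add, invOf_eq_inv]
  rcases Int.units_eq_one_or ε with rfl | rfl
  · exact .inr (by rw [one_smul]; module)
  · exact .inl (by rw [Units.neg_smul, one_smul]; module)

theorem smul_add_sum_smul_midpoint_mem_bangCore [AddCommGroup E] [Module ℝ E] {C : Set E}
    (hC : Convex ℝ C) {a b : ι → E} (ha : ∀ i, a i ∈ C) (hb : ∀ i, b i ∈ C) {t : ι → ℝ}
    (ht : ∀ i, 0 ≤ t i) (ht_sum : ∑ i, t i ≤ 1) {x : E} (hx : x ∈ C) :
    (1 - ∑ i, t i) • x + ∑ i, t i • midpoint ℝ (a i) (b i) ∈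
      bangCore C fun i => (t i / 2) • (b i - a i) := by
  intro ε
  have hendpoint (i : ι) : midpoint ℝ (a i) (b i) + ε i • (1 / 2 : ℝ) • (b i - a i) ∈ C :=
    Set.pair_subset (ha i) (hb i) (midpoint_add_units_smul_mem_pair (a i) (b i) (ε i))
  convert convex_one_sub_sum_smul_add_sum_smul_mem hC ht ht_sum hx hendpoint using 1
  rw [add_assoc, ← Finset.sum_add_distrib]
  congr! 2 with i
  rw [smul_add, smul_comm (t i), smul_smul, mul_one_div]

end BangCore

section Signs

variable {ι E : Type*}

theorem sum_update_neg_units_smul [Fintype ι] [DecidableEq ι] [AddCommGroup E] (v : ι → E)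
    (ε : ι → ℤˣ) (i : ι) :
    ∑ j, Function.update ε i (-ε i) j • v j = ∑ j, ε j • v j - (2 : ℤ) • ε i • v i := by
  rw [sub_eq_add_neg, ← sub_eq_iff_eq_add', ← Finset.sum_sub_distrib, Finset.sum_eq_single i]
  · rw [Function.update_self, Units.neg_smul]
    abel
  · intro j _ hj
    rw [Function.update_of_ne hj, sub_self]
  · simp

variable [NormedAddCommGroup E] [InnerProductSpace ℝ E]

theorem exists_signs_norm_sq_le [Fintype ι] (v : ι → E) (m : ι → ℝ) :
    ∃ ε : ι → ℤˣ, ∀ i, ‖v i‖ ^ 2 ≤ ε i • (⟪∑ j, ε j • v j, v i⟫ - m i) := by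
  classical
  obtain ⟨ε, hε⟩ := Finite.exists_max fun ε : ι → ℤˣ =>
    ‖∑ j, ε j • v j‖ ^ 2 - 2 * ∑ j, ε j • m j
  refine ⟨ε, fun i => ?_⟩
  have hflip := hε (Function.update ε i (-ε i))
  rw [sum_update_neg_units_smul, sum_update_neg_units_smul, norm_sub_sq_real] at hflip
  generalize ∑ j, ε j • v j = S at hflip ⊢
  rcases Int.units_eq_one_or (ε i) with h | h <;>
    simp only [h, one_smul, Units.neg_smul, smul_neg, norm_neg, inner_neg_right, smul_eq_mul,
      ← Int.cast_smul_eq_zsmul ℝ, Int.cast_ofNat, real_inner_smul_right, norm_smul,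
      Real.norm_ofNat] at hflip ⊢ <;>
    linarith

/-- The part of the complement of the open planks `{y | |⟪y - c i, u i⟫| < r i}` that lies on the
side `ε i` of the `i`-th plank for all `i`. -/
def signCell (u c : ι → E) (r : ι → ℝ) (ε : ι → ℤˣ) : Set E :=
  {y | ∀ i, r i ≤ ε i • ⟪y - c i, u i⟫}

theorem isClosed_signCell (u c : ι → E) (r : ι → ℝ) (ε : ι → ℤˣ) :
    IsClosed (signCell u c r ε) := by
  simp only [signCell, Set.ofPred_forall]
  exact isClosed_iInter fun i => isClosed_le (by fun_prop) (by fun_prop)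

theorem le_abs_inner_of_mem_signCell {u c : ι → E} {r : ι → ℝ} {ε : ι → ℤˣ} {y : E}
    (hy : y ∈ signCell u c r ε) (i : ι) : r i ≤ |⟪y - c i, u i⟫| := by
  refine (hy i).trans ?_
  rcases Int.units_eq_one_or (ε i) with h | h
  · simpa only [h, one_smul] using le_abs_self _
  · simpa only [h, Units.neg_smul, one_smul] using neg_le_abs _

theorem pairwise_disjoint_signCell (u c : ι → E) {r : ι → ℝ} (hr : ∀ i, 0 < r i) :
    Pairwise (Function.onFun Disjoint (signCell u c r)) := by
  intro ε ε' hne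
  obtain ⟨i, hi⟩ := Function.ne_iff.1 hne
  refine Set.disjoint_left.2 fun y hy hy' => ?_
  have hside := hy i
  have hside' := hy' i
  rw [Int.units_ne_iff_eq_neg.1 hi, Units.neg_smul] at hside
  linarith [hr i]

theorem exists_add_sum_mem_signCell [Fintype ι] {u : ι → E} (hu : ∀ i, ‖u i‖ = 1) (c : ι → E)
    {r : ι → ℝ} (hr : ∀ i, 0 < r i) (x : E) :
    ∃ ε : ι → ℤˣ, x + ∑ i, ε i • r i • u i ∈ signCell u c r ε := by
  obtain ⟨ε, hε⟩ := exists_signs_norm_sq_le (fun i => r i • u i) fun i => ⟪c i - x, r i • u i⟫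
  refine ⟨ε, fun i => ?_⟩
  have hscaled := hε i
  rw [← inner_sub_left, norm_smul, hu, mul_one, Real.norm_of_nonneg (hr i).le,
    inner_smul_right, ← mul_smul_comm, sq, sub_sub_eq_add_sub, add_comm _ x] at hscaled
  exact le_of_mul_le_mul_left hscaled (hr i)

end Signs

section Volume

variable {ι E : Type*} [NormedAddCommGroup E] [InnerProductSpace ℝ E]
  [FiniteDimensional ℝ E] [MeasurableSpace E] [BorelSpace E] (μ : Measure E) [μ.IsAddHaarMeasure]

theorem measure_setOf_abs_inner_sub_eq {u : E} (hu : u ≠ 0) (c : E) (r : ℝ) :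
    μ {y | |⟪y - c, u⟫| = r} = 0 := by
  have hsurj : Function.Surjective (innerₗ E u) := LinearMap.surjective fun h => hu <| by
    simpa using LinearMap.congr_fun h u
  have hfin : {s : ℝ | |s - ⟪u, c⟫| = r}.Finite :=
    Set.Finite.subset (Set.toFinite {⟪u, c⟫ + r, ⟪u, c⟫ - r}) fun s hs => by
      rcases eq_or_eq_neg_of_abs_eq hs with h | h
      · exact .inl (by linarith)
      · exact .inr (by simp only [Set.mem_singleton_iff]; linarith)
  have hae := (ae_comp_linearMap_mem_iff (innerₗ E u) μ volume hsurj
    hfin.measurableSet.compl).2 (compl_mem_ae_iff.2 (hfin.measure_zero volume))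
  simpa [ae_iff, inner_sub_left, real_inner_comm] using hae

theorem measure_sdiff_iUnion_open_plank_le [Countable ι] {u : ι → E} (hu : ∀ i, u i ≠ 0)
    (c : ι → E) (r : ι → ℝ) (C : Set E) :
    μ (C \ ⋃ i, {y | |⟪y - c i, u i⟫| < r i}) ≤ μ (C \ ⋃ i, {y | |⟪y - c i, u i⟫| ≤ r i}) := by
  have hboundary : μ (⋃ i, {y | |⟪y - c i, u i⟫| = r i}) = 0 :=
    measure_iUnion_null fun i => measure_setOf_abs_inner_sub_eq μ (hu i) (c i) (r i)
  rw [← measure_sdiff_null (s := C \ _) hboundary]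
  refine measure_mono fun y => ?_
  simp only [Set.mem_sdiff, Set.mem_iUnion, Set.mem_ofPred_eq, not_exists, not_lt, not_le]
  exact fun h => ⟨h.1.1, fun i => (h.1.2 i).lt_of_ne' (h.2 i)⟩

theorem measure_bangCore_le [Fintype ι] {u : ι → E} (hu : ∀ i, ‖u i‖ = 1) (c : ι → E)
    {r : ι → ℝ} (hr : ∀ i, 0 < r i) {C : Set E} (hC : MeasurableSet C) :
    μ (bangCore C fun i => r i • u i) ≤ μ (C \ ⋃ i, {y | |⟪y - c i, u i⟫| ≤ r i}) := by
  classical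
  have hcover : (bangCore C fun i => r i • u i) ⊆
      ⋃ ε : ι → ℤˣ, (fun x => x + ∑ i, ε i • r i • u i) ⁻¹' (C ∩ signCell u c r ε) := fun x hx =>
    let ⟨ε, hε⟩ := exists_add_sum_mem_signCell hu c hr x
    Set.mem_iUnion.2 ⟨ε, hx ε, hε⟩
  have hdisj : Pairwise (Function.onFun Disjoint fun ε => C ∩ signCell u c r ε) := fun ε ε' h =>
    (pairwise_disjoint_signCell u c hr h).mono Set.inter_subset_right Set.inter_subset_right
  have hmeas (ε : ι → ℤˣ) : MeasurableSet (C ∩ signCell u c r ε) :=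
    hC.inter (isClosed_signCell u c r ε).measurableSet
  calc μ (bangCore C fun i => r i • u i)
      ≤ ∑ ε : ι → ℤˣ, μ ((fun x => x + ∑ i, ε i • r i • u i) ⁻¹' (C ∩ signCell u c r ε)) :=
        (measure_mono hcover).trans (measure_iUnion_fintype_le _ _)
    _ = μ (⋃ ε, C ∩ signCell u c r ε) := by
        simp only [measure_preimage_add_right, measure_iUnion hdisj hmeas, tsum_fintype]
    _ ≤ μ (C \ ⋃ i, {y | |⟪y - c i, u i⟫| < r i}) := by
        refine measure_mono (Set.iUnion_subset fun ε y hy => ⟨hy.1, ?_⟩)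
        simpa using le_abs_inner_of_mem_signCell hy.2
    _ ≤ μ (C \ ⋃ i, {y | |⟪y - c i, u i⟫| ≤ r i}) :=
        measure_sdiff_iUnion_open_plank_le μ (fun i => norm_ne_zero_iff.1 (by simp [hu])) c r C

end Volume

theorem measure_inter_le_sub_of_le_measure_sdiff {α : Type*} [MeasurableSpace α] {μ : Measure α}
    {C Q U : Set α} (hU : MeasurableSet U) (hC : μ C ≠ ⊤) (hQ : μ Q ≤ μ (C \ U)) :
    μ (U ∩ C) ≤ μ C - μ Q := by
  have hQ_fin : μ Q ≠ ⊤ := ne_top_of_le_ne_top hC (hQ.trans (measure_mono Set.sdiff_subset))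
  refine ENNReal.le_sub_of_add_le_right hQ_fin ?_
  calc μ (U ∩ C) + μ Q ≤ μ (C ∩ U) + μ (C \ U) := by rw [Set.inter_comm]; gcongr
    _ = μ C := measure_inter_add_sdiff C hU

section Width

variable {d : ℕ} {C Q : Set (EuclideanSpace ℝ (Fin d))}

theorem isBounded_image_inner (hC : Bornology.IsBounded C) (u : EuclideanSpace ℝ (Fin d)) :
    Bornology.IsBounded ((fun x => ⟪x, u⟫) '' C) :=
  ((innerSL ℝ).flip u).lipschitz.isBounded_image hC

theorem inner_sub_le_dirWidth (hC : Bornology.IsBounded C) {a b : EuclideanSpace ℝ (Fin d)}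
    (ha : a ∈ C) (hb : b ∈ C) (u : EuclideanSpace ℝ (Fin d)) : ⟪b - a, u⟫ ≤ dirWidth C u := by
  have hbdd := isBounded_image_inner hC u
  rw [inner_sub_left]
  exact sub_le_sub (le_csSup hbdd.bddAbove (Set.mem_image_of_mem _ hb))
    (csInf_le hbdd.bddBelow (Set.mem_image_of_mem _ ha))

theorem exists_dirWidth_eq_inner_sub (hC : IsCompact C) (hne : C.Nonempty)
    (u : EuclideanSpace ℝ (Fin d)) : ∃ a ∈ C, ∃ b ∈ C, dirWidth C u = ⟪b - a, u⟫ := by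
  have hcont : ContinuousOn (fun x => ⟪x, u⟫) C := by fun_prop
  obtain ⟨a, ha, hinf⟩ := hC.exists_sInf_image_eq hne hcont
  obtain ⟨b, hb, hsup⟩ := hC.exists_sSup_image_eq hne hcont
  exact ⟨a, ha, b, hb, by rw [dirWidth, hinf, hsup, inner_sub_left]⟩

theorem minWidth_le_dirWidth (hC : Bornology.IsBounded C) {u : EuclideanSpace ℝ (Fin d)}
    (hu : ‖u‖ = 1) : minWidth C ≤ dirWidth C u := by
  have hnonneg (v : EuclideanSpace ℝ (Fin d)) : 0 ≤ dirWidth C v :=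
    have hbdd := isBounded_image_inner hC v
    sub_nonneg.2 (Real.sInf_le_sSup _ hbdd.bddBelow hbdd.bddAbove)
  exact ciInf_le (f := fun v : {v : EuclideanSpace ℝ (Fin d) // ‖v‖ = 1} => dirWidth C v)
    ⟨0, Set.forall_mem_range.2 fun v => hnonneg v⟩ ⟨u, hu⟩

theorem norm_mul_minWidth_le_dirWidth (hC : IsCompact C) (hne : C.Nonempty)
    (z : EuclideanSpace ℝ (Fin d)) : ‖z‖ * minWidth C ≤ dirWidth C z := by
  rcases eq_or_ne z 0 with rfl | hz
  · obtain ⟨a, -, b, -, h⟩ := exists_dirWidth_eq_inner_sub hC hne 0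
    simp [h]
  obtain ⟨a, ha, b, hb, h⟩ := exists_dirWidth_eq_inner_sub hC hne (‖z‖⁻¹ • z)
  have hunit : ‖‖z‖⁻¹ • z‖ = 1 := norm_smul_inv_norm hz
  calc ‖z‖ * minWidth C ≤ ‖z‖ * dirWidth C (‖z‖⁻¹ • z) := by
        gcongr
        exact minWidth_le_dirWidth hC.isBounded hunit
    _ = ⟪b - a, z⟫ := by
        rw [h, inner_smul_right, mul_inv_cancel_left₀ (norm_ne_zero_iff.2 hz)]
    _ ≤ dirWidth C z := inner_sub_le_dirWidth hC.isBounded ha hb z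

theorem closedBall_minWidth_subset_sub (hC : IsCompact C) (hconv : Convex ℝ C)
    (hne : C.Nonempty) : Metric.closedBall 0 (minWidth C) ⊆ C - C := by
  intro x hx
  by_contra hnot
  obtain ⟨f, s, hlt, hgt⟩ := geometric_hahn_banach_closed_point (hconv.sub hconv)
    (sub_eq_add_neg C C ▸ hC.add hC.neg).isClosed hnot
  obtain ⟨z, rfl⟩ := (InnerProductSpace.toDual ℝ (EuclideanSpace ℝ (Fin d))).surjective f
  simp only [InnerProductSpace.toDual_apply_apply] at hlt hgt
  obtain ⟨a, ha, b, hb, hwidth⟩ := exists_dirWidth_eq_inner_sub hC hne z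
  refine lt_irrefl (dirWidth C z) ?_
  calc dirWidth C z = ⟪z, b - a⟫ := by rw [hwidth, real_inner_comm]
    _ < s := hlt _ (Set.sub_mem_sub hb ha)
    _ < ⟪z, x⟫ := hgt
    _ ≤ ‖z‖ * ‖x‖ := real_inner_le_norm z x
    _ ≤ ‖z‖ * minWidth C := by
        gcongr
        exact mem_closedBall_zero_iff.1 hx
    _ ≤ dirWidth C z := norm_mul_minWidth_le_dirWidth hC hne z

theorem mul_minWidth_le_of_homothetic_subset (hC : IsCompact C) (hne : C.Nonempty)
    (hQ : Bornology.IsBounded Q) {ρ : ℝ} (hρ : 0 ≤ ρ) {q : EuclideanSpace ℝ (Fin d)}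
    (hsub : ∀ x ∈ C, ρ • x + q ∈ Q) : ρ * minWidth C ≤ minWidth Q := by
  rcases isEmpty_or_nonempty {v : EuclideanSpace ℝ (Fin d) // ‖v‖ = 1} with h | h
  · simp [minWidth]
  refine le_ciInf fun ⟨u, hu⟩ => ?_
  obtain ⟨a, ha, b, hb, hwidth⟩ := exists_dirWidth_eq_inner_sub hC hne u
  calc ρ * minWidth C ≤ ρ * dirWidth C u := by
        gcongr
        exact minWidth_le_dirWidth hC.isBounded hu
    _ = ⟪(ρ • b + q) - (ρ • a + q), u⟫ := by
        rw [hwidth, add_sub_add_right_eq_sub, ← smul_sub, real_inner_smul_left]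
    _ ≤ dirWidth Q u := inner_sub_le_dirWidth hQ (hsub a ha) (hsub b hb) u

theorem minWidth_sub_sum_le_minWidth_bangCore {ι : Type*} [Fintype ι] (hC : IsCompact C)
    (hconv : Convex ℝ C) (hne : C.Nonempty) {u : ι → EuclideanSpace ℝ (Fin d)}
    (hu : ∀ i, ‖u i‖ = 1) {w : ι → ℝ} (hw : ∀ i, 0 ≤ w i) (hsum : ∑ i, w i < minWidth C) :
    minWidth C - ∑ i, w i ≤ minWidth (bangCore C fun i => (w i / 2) • u i) := by
  have hpos : 0 < minWidth C := (Finset.sum_nonneg fun i _ => hw i).trans_lt hsum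
  have hchord (i : ι) : ∃ b ∈ C, ∃ a ∈ C, b - a = minWidth C • u i :=
    closedBall_minWidth_subset_sub hC hconv hne <| mem_closedBall_zero_iff.2 <| by
      rw [norm_smul, hu, mul_one, Real.norm_of_nonneg hpos.le]
  choose b hb a ha hab using hchord
  have hoffset : (fun i => (w i / minWidth C / 2) • (b i - a i)) = fun i => (w i / 2) • u i := by
    ext1 i
    rw [hab, smul_smul, div_right_comm, div_mul_cancel₀ _ hpos.ne']
  have hratio : ∑ i, w i / minWidth C ≤ 1 := by
    rw [← Finset.sum_div]
    exact (div_le_one hpos).2 hsum.le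
  calc minWidth C - ∑ i, w i = (1 - ∑ i, w i / minWidth C) * minWidth C := by
        rw [← Finset.sum_div, sub_mul, one_mul, div_mul_cancel₀ _ hpos.ne']
    _ ≤ minWidth (bangCore C fun i => (w i / 2) • u i) :=
        mul_minWidth_le_of_homothetic_subset hC hne (isCompact_bangCore hC _).isBounded
          (sub_nonneg.2 hratio) fun x hx => hoffset ▸
            smul_add_sum_smul_midpoint_mem_bangCore hconv ha hb
              (fun i => div_nonneg (hw i) hpos.le) hratio hx

end Width

/-- **Bang's partial covering estimate.** If `C` is a convex body of minimal width `w > 0`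
and `P₁, …, Pₙ` are planks of widths `w₁, …, wₙ` with `w₀ = w₁ + ⋯ + wₙ < w`, then there
is a set `Q`, an intersection of at most `2^n` translates of `C`, of minimal width at
least `w − w₀`, with `vol(C \ (P₁ ∪ ⋯ ∪ Pₙ)) ≥ vol(Q)`; in particular
`vol((P₁ ∪ ⋯ ∪ Pₙ) ∩ C) ≤ vol(C) − vol(Q)`. -/
theorem bang_partial_covering {d n : ℕ} (C : Set (EuclideanSpace ℝ (Fin d)))
    (hC : IsCompact C) (hCconv : Convex ℝ C) (hCint : (interior C).Nonempty)
    (w : ℝ) (hw : minWidth C = w) (hwpos : 0 < w)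
    (P : Fin n → Set (EuclideanSpace ℝ (Fin d))) (wi : Fin n → ℝ)
    (hP : ∀ i, IsPlank (P i) (wi i)) (hsum : ∑ i, wi i < w) :
    ∃ Q : Set (EuclideanSpace ℝ (Fin d)),
      (∃ s : Finset (EuclideanSpace ℝ (Fin d)), s.Nonempty ∧ s.card ≤ 2 ^ n ∧
        Q = ⋂ t ∈ s, (fun x => t + x) '' C) ∧
      w - ∑ i, wi i ≤ minWidth Q ∧
      volume Q ≤ volume (C \ ⋃ i, P i) ∧
      volume ((⋃ i, P i) ∩ C) ≤ volume C - volume Q := by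
  subst hw
  have hne : C.Nonempty := hCint.mono interior_subset
  choose hwi u c hu hPeq using hP
  obtain rfl : P = fun i => {x | |⟪x - c i, u i⟫| ≤ wi i / 2} := funext hPeq
  have hplanks : MeasurableSet (⋃ i, {x | |⟪x - c i, u i⟫| ≤ wi i / 2}) :=
    .iUnion fun i => (isClosed_le (by fun_prop) (by fun_prop)).measurableSet
  have hvol := measure_bangCore_le volume hu c (fun i => half_pos (hwi i)) hC.measurableSet
  refine ⟨bangCore C fun i => (wi i / 2) • u i, ?_, ?_, hvol, ?_⟩
  · simpa only [Fintype.card_fin] using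
      exists_finset_bangCore_eq_biInter C fun i => (wi i / 2) • u i
  · exact minWidth_sub_sum_le_minWidth_bangCore hC hCconv hne hu (fun i => (hwi i).le) hsum
  · exact measure_inter_le_sub_of_le_measure_sdiff hplanks hC.measure_lt_top.ne hvol
end

section
/- Let C = [0,1]² be the unit square in E^2 and let ε = 1 − 1/√2. Suppose T is a translate of ε·C contained in the interior of C, and suppose the annulus C \ T is covered by finitely many planks P_1, ..., P_n in E^2. Then the sum of the widths of the planks satisfies w(P_1) + ... + w(P_n) ≥ 1. -/
open scoped RealInnerProductSpace

/-!
This is Bang's argument for the plank problem, run from two starting points. Suppose the widths sum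
to less than `1`. Attach to the `j`-th plank a normal vector `v j`, slightly longer than half its
width. For every start `p`, a choice of signs maximizing Bang's functional gives a point
`p + ∑ ± v j` outside all planks. By Cauchy-Schwarz some coordinate `c` satisfies
`∑ |v j c| < 1 / (2 * √d)`, so the start can move along a segment of length more than `1 - 1 / √d`
in direction `c` with all the resulting points staying in the cube. The maximizing signs are
monotone in `p`, so the points obtained from the two ends of the segment are at least as far apart
in coordinate `c` as the ends themselves: the removed set cannot contain both.
-/

section SignedSum

variable {ι M : Type*} [Fintype ι]

/-- The sum `∑ ± f j` with signs prescribed by `s`; the signs are units of `ℤ`, which makes the set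
of sign choices finite. -/
def signedSum [AddCommGroup M] (s : ι → ℤˣ) (f : ι → M) : M := ∑ j, s j • f j

lemma signedSum_update_neg [DecidableEq ι] [AddCommGroup M] (s : ι → ℤˣ) (f : ι → M) (i : ι) :
    signedSum (Function.update s i (-s i)) f = signedSum s f - (2 : ℤ) • s i • f i := by
  have hcompl : ∑ j ∈ {i}ᶜ, Function.update s i (-s i) j • f j = ∑ j ∈ {i}ᶜ, s j • f j :=
    Finset.sum_congr rfl fun j hj ↦ by
      rw [Function.update_of_ne (by simpa using hj)]
  rw [signedSum, signedSum, Fintype.sum_eq_add_sum_compl i,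
    Fintype.sum_eq_add_sum_compl i (fun j ↦ s j • f j), hcompl, Function.update_self,
    Units.neg_smul]
  abel

lemma norm_signedSum_le [SeminormedAddCommGroup M] (s : ι → ℤˣ) (f : ι → M) :
    ‖signedSum s f‖ ≤ ∑ j, ‖f j‖ :=
  norm_sum_le_of_le _ fun j _ ↦ (norm_units_zsmul (s j) (f j)).le

lemma signedSum_apply {κ : Type*} (s : ι → ℤˣ) (v : ι → EuclideanSpace ℝ κ) (i : κ) :
    signedSum s v i = signedSum s fun j ↦ v j i := by
  simp [signedSum, Units.smul_def]

end SignedSum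

section Bang

variable {ι V : Type*} [Fintype ι] [NormedAddCommGroup V] [InnerProductSpace ℝ V]

/-- Bang's functional on sign choices, for vectors `v`, offsets `k` and starting point `p`. If `s`
maximizes it, then `p + signedSum s v` avoids the slabs `|⟪x, v j⟫ - k j| < ‖v j‖ ^ 2`. -/
noncomputable def bangFunctional (v : ι → V) (k : ι → ℝ) (p : V) (s : ι → ℤˣ) : ℝ :=
  ‖p + signedSum s v‖ ^ 2 - 2 * signedSum s k

lemma norm_sub_two_zsmul_units_smul_sq (x y : V) (σ : ℤˣ) :
    ‖x - (2 : ℤ) • σ • y‖ ^ 2 = ‖x‖ ^ 2 - 4 * σ • ⟪x, y⟫ + 4 * ‖y‖ ^ 2 := by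
  rw [norm_sub_sq_real, ← Int.cast_smul_eq_zsmul ℝ, inner_smul_right, norm_smul,
    norm_units_zsmul]
  rcases Int.units_eq_one_or σ with rfl | rfl <;> norm_num <;> ring

lemma norm_sq_le_abs_inner_sub_of_forall_bangFunctional_le {v : ι → V} {k : ι → ℝ} {p : V}
    {s : ι → ℤˣ} (hs : ∀ r, bangFunctional v k p r ≤ bangFunctional v k p s) (i : ι) :
    ‖v i‖ ^ 2 ≤ |⟪p + signedSum s v, v i⟫ - k i| := by
  classical
  have hflip := hs (Function.update s i (-s i))
  simp only [bangFunctional, signedSum_update_neg, ← add_sub_assoc,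
    norm_sub_two_zsmul_units_smul_sq, zsmul_eq_mul, Int.cast_ofNat] at hflip
  calc ‖v i‖ ^ 2 ≤ s i • (⟪p + signedSum s v, v i⟫ - k i) := by rw [smul_sub]; linarith
    _ ≤ ‖s i • (⟪p + signedSum s v, v i⟫ - k i)‖ := Real.le_norm_self _
    _ = |⟪p + signedSum s v, v i⟫ - k i| := norm_units_zsmul _ _

lemma inner_sub_signedSum_sub_nonneg {v : ι → V} {k : ι → ℝ} {p q : V} {s t : ι → ℤˣ}
    (hs : ∀ r, bangFunctional v k p r ≤ bangFunctional v k p s)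
    (ht : ∀ r, bangFunctional v k q r ≤ bangFunctional v k q t) :
    0 ≤ ⟪q - p, signedSum t v - signedSum s v⟫ := by
  have hst := hs t
  have hts := ht s
  simp only [bangFunctional, norm_add_sq_real] at hst hts
  simp only [inner_sub_left, inner_sub_right]
  linarith

lemma exists_signedSum_pair_norm_sq_le_abs_inner_sub (v : ι → V) (k : ι → ℝ) (p q : V) :
    ∃ s t : ι → ℤˣ, (∀ j, ‖v j‖ ^ 2 ≤ |⟪p + signedSum s v, v j⟫ - k j|) ∧
      (∀ j, ‖v j‖ ^ 2 ≤ |⟪q + signedSum t v, v j⟫ - k j|) ∧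
      0 ≤ ⟪q - p, signedSum t v - signedSum s v⟫ := by
  obtain ⟨s, hs⟩ := Finite.exists_max (bangFunctional v k p)
  obtain ⟨t, ht⟩ := Finite.exists_max (bangFunctional v k q)
  exact ⟨s, t, norm_sq_le_abs_inner_sub_of_forall_bangFunctional_le hs,
    norm_sq_le_abs_inner_sub_of_forall_bangFunctional_le ht, inner_sub_signedSum_sub_nonneg hs ht⟩

end Bang

section Cube

variable {ι κ : Type*}

/-- The unit cube `[0, 1]^ι` of Euclidean space; for `ι = Fin 2` it is the square `C`. -/
def unitCube (ι : Type*) : Set (EuclideanSpace ℝ ι) := {x | ∀ i, 0 ≤ x i ∧ x i ≤ 1}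

lemma apply_sub_apply_le_of_mem_image_unitCube {ε : ℝ} (hε : 0 ≤ ε) {t x y : EuclideanSpace ℝ ι}
    (hx : x ∈ (fun z ↦ t + ε • z) '' unitCube ι) (hy : y ∈ (fun z ↦ t + ε • z) '' unitCube ι)
    (i : ι) : x i - y i ≤ ε := by
  obtain ⟨a, ha, rfl⟩ := hx
  obtain ⟨b, hb, rfl⟩ := hy
  calc (t + ε • a) i - (t + ε • b) i = ε * (a i - b i) := by
        simp only [PiLp.add_apply, PiLp.smul_apply, smul_eq_mul]; ring
    _ ≤ ε := mul_le_of_le_one_right hε (by linarith [(ha i).2, (hb i).1])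

variable [Fintype κ]

lemma add_signedSum_mem_unitCube {v : κ → EuclideanSpace ℝ ι} {p : EuclideanSpace ℝ ι}
    (hp : ∀ i, |p i - 1 / 2| + ∑ j, |v j i| ≤ 1 / 2) (s : κ → ℤˣ) :
    p + signedSum s v ∈ unitCube ι := fun i ↦ by
  have hsum : |signedSum s fun j ↦ v j i| ≤ ∑ j, |v j i| :=
    norm_signedSum_le s fun j ↦ v j i
  have hle : |p i - 1 / 2 + signedSum s fun j ↦ v j i| ≤ 1 / 2 :=
    (abs_add_le _ _).trans ((add_le_add_right hsum _).trans (hp i))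
  rw [PiLp.add_apply, signedSum_apply]
  constructor <;> linarith [(abs_le.1 hle).1, (abs_le.1 hle).2]

lemma exists_unitCube_pair_norm_sq_le_abs_inner_sub [Fintype ι] (v : κ → EuclideanSpace ℝ ι)
    (k : κ → ℝ) (hv : ∀ i, ∑ j, |v j i| < 1 / 2) (c : ι) :
    ∃ x ∈ unitCube ι, ∃ y ∈ unitCube ι, (∀ j, ‖v j‖ ^ 2 ≤ |⟪x, v j⟫ - k j|) ∧
      (∀ j, ‖v j‖ ^ 2 ≤ |⟪y, v j⟫ - k j|) ∧ 1 - 2 * ∑ j, |v j c| ≤ y c - x c := by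
  classical
  let start (b : ℝ) : EuclideanSpace ℝ ι :=
    WithLp.toLp 2 (fun _ ↦ 1 / 2) + EuclideanSpace.single c b
  set a := 1 / 2 - ∑ j, |v j c| with ha
  have ha_pos : 0 < a := sub_pos.2 (hv c)
  have start_mem {b : ℝ} (hb : |b| = a) (s : κ → ℤˣ) : start b + signedSum s v ∈ unitCube ι := by
    refine add_signedSum_mem_unitCube (fun i ↦ ?_) s
    rcases eq_or_ne i c with rfl | hi
    · simp [start, hb, ha]
    · simpa [start, hi] using (hv i).le
  obtain ⟨s, t, hs, ht, hst⟩ :=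
    exists_signedSum_pair_norm_sq_le_abs_inner_sub v k (start (-a)) (start a)
  refine ⟨_, start_mem (by rw [abs_neg, abs_of_pos ha_pos]) s, _,
    start_mem (abs_of_pos ha_pos) t, hs, ht, ?_⟩
  have hsub : start a - start (-a) = EuclideanSpace.single c (2 * a) := by
    ext i
    rcases eq_or_ne i c with rfl | hi
    · simp [start]; ring
    · simp [start, hi]
  have hmono : 0 ≤ signedSum t v c - signedSum s v c := by
    rw [hsub, EuclideanSpace.inner_single_left] at hst
    simpa [ha_pos] using hst
  have hc : start a c - start (-a) c = 2 * a := by simpa using PiLp.ext_iff.1 hsub c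
  simp only [PiLp.add_apply]
  linarith

end Cube

section Pigeonhole

variable {ι κ : Type*} [Fintype ι] [Fintype κ]

lemma sum_abs_apply_le_sqrt_card_mul_norm (x : EuclideanSpace ℝ ι) :
    ∑ i, |x i| ≤ √(Fintype.card ι) * ‖x‖ := by
  rw [EuclideanSpace.norm_eq, ← Real.sqrt_mul (Nat.cast_nonneg _)]
  exact Real.le_sqrt_of_sq_le sq_sum_le_card_mul_sum_sq

lemma exists_sum_abs_apply_le [Nonempty ι] (v : κ → EuclideanSpace ℝ ι) :
    ∃ i, ∑ j, |v j i| ≤ (∑ j, ‖v j‖) / √(Fintype.card ι) := by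
  obtain ⟨i, -, hi⟩ := Finset.exists_le_of_sum_le (s := Finset.univ)
    (f := fun i ↦ ∑ j, |v j i|) (g := fun _ ↦ (∑ j, ‖v j‖) / √(Fintype.card ι))
    Finset.univ_nonempty <| calc
      ∑ i, ∑ j, |v j i| = ∑ j, ∑ i, |v j i| := Finset.sum_comm
      _ ≤ ∑ j, √(Fintype.card ι) * ‖v j‖ :=
        Finset.sum_le_sum fun j _ ↦ sum_abs_apply_le_sqrt_card_mul_norm (v j)
      _ = ∑ _i : ι, (∑ j, ‖v j‖) / √(Fintype.card ι) := by
        rw [← Finset.mul_sum, Finset.sum_const, Finset.card_univ, nsmul_eq_mul, mul_div_left_comm,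
          Real.div_sqrt, mul_comm]
  exact ⟨i, hi⟩

end Pigeonhole

section Planks

variable {d : ℕ}

lemma IsPlank.exists_forall_notMem {P : Set (EuclideanSpace ℝ (Fin d))} {w l : ℝ}
    (hP : IsPlank P w) (hl : 1 < l) :
    ∃ (v : EuclideanSpace ℝ (Fin d)) (k : ℝ), ‖v‖ = l * w / 2 ∧
      ∀ x, ‖v‖ ^ 2 ≤ |⟪x, v⟫ - k| → x ∉ P := by
  obtain ⟨hw, u, m, hu, rfl⟩ := hP
  have hr : 0 < l * w / 2 := by positivity
  have hnorm : ‖(l * w / 2) • u‖ = l * w / 2 := by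
    rw [norm_smul, hu, mul_one, Real.norm_of_nonneg hr.le]
  refine ⟨(l * w / 2) • u, ⟪m, (l * w / 2) • u⟫, hnorm, fun x hx ↦ ?_⟩
  rw [Set.mem_ofPred_eq, not_le]
  rw [hnorm, ← inner_sub_left, real_inner_smul_right, abs_mul, abs_of_pos hr, sq] at hx
  calc w / 2 < l * w / 2 := by nlinarith
    _ ≤ |⟪x - m, u⟫| := le_of_mul_le_mul_left hx hr

variable [NeZero d] {κ : Type*} [Fintype κ]

open scoped Topology in
lemma exists_unitCube_pair_notMem_planks {P : κ → Set (EuclideanSpace ℝ (Fin d))} {w : κ → ℝ}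
    (hP : ∀ j, IsPlank (P j) (w j)) (hw : ∑ j, w j < 1) :
    ∃ c, ∃ x ∈ unitCube (Fin d), ∃ y ∈ unitCube (Fin d),
      (∀ j, x ∉ P j) ∧ (∀ j, y ∉ P j) ∧ 1 - 1 / √d < y c - x c := by
  obtain ⟨l, hl, hlw⟩ : ∃ l : ℝ, 1 < l ∧ l * ∑ j, w j < 1 := by
    have hnear : ∀ᶠ l in 𝓝[>] (1 : ℝ), l * ∑ j, w j < 1 := nhdsWithin_le_nhds <|
      ContinuousAt.eventually_lt (by fun_prop) continuousAt_const (by simpa using hw)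
    exact (eventually_mem_nhdsWithin.and hnear).exists
  choose v k hv hvP using fun j ↦ (hP j).exists_forall_notMem hl
  have hsum : ∑ j, ‖v j‖ < 1 / 2 := by
    simp only [hv]
    rw [← Finset.sum_div, ← Finset.mul_sum]
    linarith
  obtain ⟨c, hc⟩ := exists_sum_abs_apply_le v
  rw [Fintype.card_fin] at hc
  have hvi (i) : ∑ j, |v j i| < 1 / 2 :=
    (Finset.sum_le_sum fun j _ ↦ PiLp.norm_apply_le (v j) i).trans_lt hsum
  obtain ⟨x, hx, y, hy, hxv, hyv, hxy⟩ :=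
    exists_unitCube_pair_norm_sq_le_abs_inner_sub v k hvi c
  refine ⟨c, x, hx, y, hy, fun j ↦ hvP j x (hxv j), fun j ↦ hvP j y (hyv j), ?_⟩
  have hd : 0 < √(d : ℝ) := Real.sqrt_pos.2 (Nat.cast_pos.2 (NeZero.pos d))
  calc 1 - 1 / √d = 1 - 2 * (1 / 2 / √d) := by ring
    _ < 1 - 2 * ((∑ j, ‖v j‖) / √d) := by gcongr
    _ ≤ 1 - 2 * ∑ j, |v j c| := by gcongr
    _ ≤ y c - x c := hxy

theorem square_annulus_planks_general {T : Set (EuclideanSpace ℝ (Fin d))}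
    (hT : ∀ x ∈ T, ∀ y ∈ T, ∀ i, x i - y i ≤ 1 - 1 / √d)
    {P : κ → Set (EuclideanSpace ℝ (Fin d))} {w : κ → ℝ} (hP : ∀ j, IsPlank (P j) (w j))
    (hcover : unitCube (Fin d) \ T ⊆ ⋃ j, P j) : 1 ≤ ∑ j, w j := by
  by_contra! hw
  obtain ⟨c, x, hx, y, hy, hxP, hyP, hxy⟩ := exists_unitCube_pair_notMem_planks hP hw
  have mem_T : ∀ z ∈ unitCube (Fin d), (∀ j, z ∉ P j) → z ∈ T := fun z hz hzP ↦
    by_contra fun hzT ↦ by simpa [hzP] using hcover ⟨hz, hzT⟩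
  exact hxy.not_ge (hT y (mem_T y hy hyP) x (mem_T x hx hxP) c)

end Planks

/-- **A. Bezdek's annulus theorem for the square.** Let `C = [0,1]²` and
`ε = 1 − 1/√2`. If a translate `T` of `ε·C` lies in the interior of `C` and the annulus
`C \ T` is covered by finitely many planks, then the sum of the widths of the planks is
at least `1`. -/
theorem square_annulus_planks {n : ℕ}
    (C : Set (EuclideanSpace ℝ (Fin 2)))
    (hC : C = {x : EuclideanSpace ℝ (Fin 2) | ∀ i, 0 ≤ x i ∧ x i ≤ 1})
    (t : EuclideanSpace ℝ (Fin 2))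
    (T : Set (EuclideanSpace ℝ (Fin 2)))
    (hT : T = (fun x => t + (1 - 1 / Real.sqrt 2) • x) '' C)
    (hTin : T ⊆ interior C)
    (P : Fin n → Set (EuclideanSpace ℝ (Fin 2))) (w : Fin n → ℝ)
    (hP : ∀ i, IsPlank (P i) (w i))
    (hcover : C \ T ⊆ ⋃ i, P i) :
    1 ≤ ∑ i, w i := by
  subst hC hT
  have hε : 0 ≤ 1 - 1 / √2 := sub_nonneg.2 (div_le_one_of_le₀ (by simp) (by positivity))
  exact square_annulus_planks_general
    (fun x hx y hy ↦ by simpa using apply_sub_apply_le_of_mem_image_unitCube hε hx hy) hP hcover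
end
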